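/- arXiv:1511.06632 — 2 statements merged into one kernel-verified Lean document; each statement's English description precedes it below -/
import Mathlib

section
/- Let N ≥ 2 be an integer, p > 1, and let φ be a nonnegative measurable function on [0,1) with ∫ φ dμ = f and ∫ φ^p dμ = F, where f, F > 0 and f^p ≤ F. Then for every u ≥ f, ∫_{{M_N φ > u}} (M_N φ)^p dμ ≥ μ({M_N φ > u})·u^p + ((N^p − 1)/(N^p − N))·max(F − u^{p−1} f, 0). -/
open MeasureTheory Set Filter

/-- The `N`-adic interval `[k/N^m, (k+1)/N^m)` at level `m`. -/
def adicItv (N m k : ℕ) : Set ℝ :=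
  Set.Ico ((k : ℝ) / (N : ℝ) ^ m) (((k : ℝ) + 1) / (N : ℝ) ^ m)

/-- The average `(1/μ(I)) ∫_I |φ| dμ` of `φ` over the `N`-adic interval at level `m`, index `k`
(its measure is `N^{-m}`). -/
noncomputable def adicAvg (N : ℕ) (φ : ℝ → ℝ) (m k : ℕ) : ℝ :=
  (N : ℝ) ^ m * ∫ y in adicItv N m k, |φ y|

/-- The `N`-adic maximal operator on `[0,1)`:
`M_N φ(x) = sup { (1/μ(I)) ∫_I |φ| dμ : x ∈ I, I an N-adic interval }`. -/
noncomputable def adicMax (N : ℕ) (φ : ℝ → ℝ) (x : ℝ) : ℝ :=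
  sSup {r : ℝ | ∃ m k : ℕ, k < N ^ m ∧ x ∈ adicItv N m k ∧ r = adicAvg N φ m k}


lemma aux_low (N : ℕ) (hN : 2 ≤ N) (p : ℝ) (hp : 1 < p) (m y : ℝ) (hm : 0 < m) (hyN : y ≤ N * m) :
    m ^ p - (((N : ℝ) ^ p - 1) / ((N : ℝ) ^ p - N)) * (m ^ (p-1) * y) ≤
    (max m y) ^ p - (((N : ℝ) ^ p - 1) / ((N : ℝ) ^ p - N)) * ((max m y) ^ (p-1) * y) := by
  have hN' : (2:ℝ) ≤ N := by exact_mod_cast hN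
  have hNp : (N:ℝ) < (N:ℝ) ^ p := by
    have := Real.rpow_lt_rpow_of_exponent_lt (x := (N:ℝ)) (by linarith) hp
    simpa using this
  rcases le_total y m with h | h
  · rw [max_eq_left h]
  rw [max_eq_right h]
  obtain ⟨t, rfl⟩ : ∃ t, y = m * t := ⟨y / m, by field_simp⟩
  have ht1 : 1 ≤ t := by
    by_contra hh; push Not at hh; nlinarith
  have htN : t ≤ N := by
    by_contra hh; push Not at hh; nlinarith
  have hm1 : m ^ (p-1) * m = m ^ p := by
    rw [← Real.rpow_add_one hm.ne']; ring_nf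
  have ht2 : t ^ (p-1) * t = t ^ p := by
    rw [← Real.rpow_add_one (by linarith)]; ring_nf
  rw [Real.mul_rpow hm.le (by linarith), Real.mul_rpow hm.le (by linarith)]
  have e1 : m ^ (p-1) * (m * t) = m ^ p * t := by rw [← hm1]; ring
  have e2 : m ^ (p-1) * t ^ (p-1) * (m * t) = m ^ p * t ^ p := by rw [← hm1, ← ht2]; ring
  rw [e1, e2]
  have hmp : 0 < m ^ p := Real.rpow_pos_of_pos hm p
  set D := (N:ℝ)^p - N with hD
  have hDpos : 0 < D := by linarith
  have hconv := (convexOn_rpow hp.le).2 (show (1:ℝ) ∈ Ici (0:ℝ) by simp) (show (N:ℝ) ∈ Ici (0:ℝ) by simp)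
    (show (0:ℝ) ≤ (N - t) / (N - 1) from div_nonneg (by linarith) (by linarith))
    (show (0:ℝ) ≤ (t - 1) / (N - 1) from div_nonneg (by linarith) (by linarith)) (by
      have : (N:ℝ) - 1 ≠ 0 := by linarith
      field_simp
      ring)
  have hne : (N:ℝ) - 1 ≠ 0 := by linarith
  have e3 : ((N - t) / (N - 1) : ℝ) • (1:ℝ) + ((t - 1) / (N - 1) : ℝ) • (N:ℝ) = t := by
    simp only [smul_eq_mul]; field_simp; ring
  rw [e3] at hconv
  simp only [smul_eq_mul, Real.one_rpow] at hconv
  have h4 : t ^ p * (N - 1) ≤ (N - t) + (t - 1) * (N:ℝ)^p := by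
    calc t ^ p * (N - 1) ≤ ((N - t) / (N - 1) * 1 + (t - 1) / (N - 1) * (N:ℝ)^p) * (N - 1) := by
          apply mul_le_mul_of_nonneg_right hconv; linarith
      _ = _ := by field_simp
  have h5 : 1 - ((N:ℝ)^p - 1) / D * t ≤ t ^ p - ((N:ℝ)^p - 1) / D * t ^ p := by
    rw [← sub_nonneg]
    have : t ^ p - ((N:ℝ)^p - 1) / D * t ^ p - (1 - ((N:ℝ)^p - 1) / D * t) =
      ((N - t) + (t - 1) * (N:ℝ)^p - t ^ p * (N - 1)) / D := by
      field_simp; rw [hD]; ring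
    rw [this]
    exact div_nonneg (by linarith) hDpos.le
  nlinarith

lemma aux_up (p : ℝ) (hp : 1 < p) (m y : ℝ) (hm : 0 < m) :
    (max m y) ^ p - (p / (p - 1)) * ((max m y) ^ (p-1) * y) ≤ 
    m ^ p - (p / (p-1)) * (m ^ (p-1) * y) := by
  rcases le_total y m with h | h
  · rw [max_eq_left h]
  rw [max_eq_right h]
  obtain ⟨t, rfl⟩ : ∃ t, y = m * t := ⟨y / m, by field_simp⟩
  have ht1 : 1 ≤ t := by
    by_contra hh; push Not at hh; nlinarith
  have hm1 : m ^ (p-1) * m = m ^ p := by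
    rw [← Real.rpow_add_one hm.ne']; ring_nf
  have ht2 : t ^ (p-1) * t = t ^ p := by
    rw [← Real.rpow_add_one (by linarith)]; ring_nf
  rw [Real.mul_rpow hm.le (by linarith), Real.mul_rpow hm.le (by linarith)]
  have e1 : m ^ (p-1) * (m * t) = m ^ p * t := by rw [← hm1]; ring
  have e2 : m ^ (p-1) * t ^ (p-1) * (m * t) = m ^ p * t ^ p := by rw [← hm1, ← ht2]; ring
  rw [e1, e2]
  have hmp : 0 < m ^ p := Real.rpow_pos_of_pos hm p
  have hB := one_add_mul_self_le_rpow_one_add (s := t - 1) (by linarith) hp.le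
  rw [add_sub_cancel] at hB
  have h5 : t ^ p - p / (p-1) * t ^ p ≤ 1 - p / (p-1) * t := by
    have hq : 0 < p - 1 := by linarith
    rw [← sub_nonneg]
    have : 1 - p / (p-1) * t - (t ^ p - p / (p-1) * t ^ p) = 
      (t ^ p - (1 + p * (t - 1))) / (p - 1) := by
      field_simp; ring
    rw [this]
    exact div_nonneg (by linarith) hq.le
  nlinarith

lemma aux_young (p : ℝ) (hp : 1 < p) (m y e : ℝ) (hm : 0 ≤ m) (hy : 0 ≤ y) (he : 0 < e) :
    m ^ (p-1) * y ≤ e * m ^ p + (e⁻¹) ^ (p-1) * y ^ p := by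
  have h1 : ∀ z : ℝ, 0 ≤ z → z ^ (p-1) * z = z ^ p := by
    intro z hz
    rcases hz.eq_or_lt with rfl | hz
    · rw [Real.zero_rpow (by linarith), Real.zero_rpow (by linarith)]; simp
    · rw [← Real.rpow_add_one hz.ne']; ring_nf
  have hmp := Real.rpow_nonneg hm p
  have hyp := Real.rpow_nonneg hy p
  have hep : 0 ≤ (e⁻¹) ^ (p-1) := Real.rpow_nonneg (by positivity) _
  rcases le_total y (e * m) with h | h
  · have : m ^ (p-1) * y ≤ m ^ (p-1) * (e * m) := 
      mul_le_mul_of_nonneg_left h (Real.rpow_nonneg hm _)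
    rw [← h1 m hm] at *
    nlinarith
  · have h2 : m ≤ e⁻¹ * y := by
      rw [← div_eq_inv_mul, le_div_iff₀ he]; linarith
    have h3 : m ^ (p-1) ≤ (e⁻¹ * y) ^ (p-1) := Real.rpow_le_rpow hm h2 (by linarith)
    rw [Real.mul_rpow (by positivity) hy] at h3
    have := mul_le_mul_of_nonneg_right h3 hy
    rw [mul_assoc, h1 y hy] at this
    nlinarith

noncomputable def idx (N n : ℕ) (x : ℝ) : ℕ := ⌊(N:ℝ) ^ n * x⌋₊

noncomputable def GG (N : ℕ) (φ : ℝ → ℝ) (u : ℝ) : ℕ → ℕ → ℝ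
  | 0, _ => u
  | (n+1), k => max (GG N φ u n (k / N)) (adicAvg N φ (n+1) k)

lemma idx_succ (N n : ℕ) (hN : 2 ≤ N) (x : ℝ) : idx N (n+1) x / N = idx N n x := by
  unfold idx
  rw [← Nat.floor_div_natCast]
  congr 1
  have : (N:ℝ) ≠ 0 := by positivity
  field_simp
  ring

lemma mem_adic (N n k : ℕ) (hN : 2 ≤ N) (x : ℝ) (hx : 0 ≤ x) : x ∈ adicItv N n k ↔ k = idx N n x := by
  unfold idx adicItv
  have : (0:ℝ) < (N:ℝ)^n := by positivity
  rw [eq_comm, Nat.floor_eq_iff (by positivity), mem_Ico, div_le_iff₀ this, lt_div_iff₀ this]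
  rw [mul_comm]

lemma idx_lt (N n : ℕ) (hN : 2 ≤ N) (x : ℝ) (hx : x ∈ Ico (0:ℝ) 1) : idx N n x < N ^ n := by
  unfold idx
  have : (0:ℝ) < (N:ℝ)^n := by positivity
  rw [Nat.floor_lt (by have := hx.1; positivity)]
  push_cast
  nlinarith [hx.2]

lemma adic_sub (N n k : ℕ) (hN : 2 ≤ N) (hk : k < N ^ n) : adicItv N n k ⊆ Ico 0 1 := by
  unfold adicItv
  have : (0:ℝ) < (N:ℝ)^n := by positivity
  apply Ico_subset_Ico
  · positivity
  · rw [div_le_one this]; exact_mod_cast hk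

lemma meas_idx (N n : ℕ) : Measurable (idx N n) := by
  unfold idx
  exact Nat.measurable_floor.comp (measurable_const.mul measurable_id)

lemma int_lvl (N n : ℕ) (hN : 2 ≤ N) (h : ℝ → ℝ) (hi : IntegrableOn h (Ico 0 1)) (G : ℕ → ℝ) :
    IntegrableOn (fun x => G (idx N n x) * h x) (Ico 0 1) := by
  apply Integrable.bdd_mul (c := ∑ k ∈ Finset.range (N^n), |G k|) hi
  · exact ((measurable_from_nat (f := G)).comp (meas_idx N n)).aestronglyMeasurable
  · filter_upwards [ae_restrict_mem measurableSet_Ico] with x hx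
    rw [Real.norm_eq_abs]
    exact Finset.single_le_sum (f := fun k => |G k|) (fun _ _ => abs_nonneg _) 
      (Finset.mem_range.2 (idx_lt N n hN x hx))

lemma sum_lvl (N n : ℕ) (hN : 2 ≤ N) (h : ℝ → ℝ) (hi : IntegrableOn h (Ico 0 1)) (G : ℕ → ℝ) :
    ∫ x in Ico (0:ℝ) 1, G (idx N n x) * h x = 
      ∑ k ∈ Finset.range (N^n), G k * ∫ x in adicItv N n k, h x := by
  have hU : Ico (0:ℝ) 1 = ⋃ k ∈ Finset.range (N^n), adicItv N n k := by
    ext x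
    simp only [mem_iUnion, Finset.mem_range, exists_prop]
    constructor
    · intro hx
      exact ⟨idx N n x, idx_lt N n hN x hx, (mem_adic N n _ hN x hx.1).2 rfl⟩
    · rintro ⟨k, hk, hx⟩
      exact adic_sub N n k hN hk hx
  have hint := int_lvl N n hN h hi G
  have hms : ∀ k, MeasurableSet (adicItv N n k) := fun k => measurableSet_Ico
  conv_lhs => rw [hU]
  rw [integral_biUnion_finset]
  · apply Finset.sum_congr rfl
    intro k hk
    rw [← integral_const_mul]
    apply setIntegral_congr_fun (hms k)
    intro x hx
    have h0 := adic_sub N n k hN (Finset.mem_range.1 hk) hx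
    simp only
    rw [← (mem_adic N n k hN x h0.1).1 hx]
  · intro k _; exact hms k
  · intro i hi j hj hij
    refine Set.disjoint_left.2 fun x hx hx' => hij ?_
    have h0 := adic_sub N n i hN (Finset.mem_range.1 hi) hx
    rw [(mem_adic N n i hN x h0.1).1 hx, (mem_adic N n j hN x h0.1).1 hx']
  · intro k hk
    exact hint.mono_set (adic_sub N n k hN (Finset.mem_range.1 hk))

lemma vol_adic (N n k : ℕ) (hN : 2 ≤ N) : volume.real (adicItv N n k) = ((N:ℝ)^n)⁻¹ := by
  unfold adicItv
  have : (0:ℝ) < (N:ℝ)^n := by positivity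
  rw [Real.volume_real_Ico_of_le]
  · field_simp; ring
  · gcongr; linarith

lemma int_avg (N n : ℕ) (hN : 2 ≤ N) (φ : ℝ → ℝ) (hi : IntegrableOn (fun x => |φ x|) (Ico 0 1)) (G : ℕ → ℝ) :
    ∫ x in Ico (0:ℝ) 1, G (idx N n x) * adicAvg N φ n (idx N n x) = 
    ∫ x in Ico (0:ℝ) 1, G (idx N n x) * |φ x| := by
  have h1 := sum_lvl N n hN (fun _ => (1:ℝ)) (by simp) (fun k => G k * adicAvg N φ n k)
  simp only [mul_one] at h1
  rw [h1, sum_lvl N n hN _ hi]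
  apply Finset.sum_congr rfl
  intro k _
  have : (0:ℝ) < (N:ℝ)^n := by positivity
  simp only [integral_const, MeasurableSet.univ, measureReal_restrict_apply, univ_inter, smul_eq_mul, vol_adic N n k hN, mul_one]
  unfold adicAvg
  field_simp

lemma avg_nonneg (N n k : ℕ) (φ : ℝ → ℝ) : 0 ≤ adicAvg N φ n k := by
  unfold adicAvg
  exact mul_nonneg (by positivity) (integral_nonneg fun _ => abs_nonneg _)

lemma avg_succ (N n : ℕ) (hN : 2 ≤ N) (φ : ℝ → ℝ) (hi : IntegrableOn (fun x => |φ x|) (Ico 0 1)) (x : ℝ)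
    (hx : x ∈ Ico (0:ℝ) 1) : 
    adicAvg N φ (n+1) (idx N (n+1) x) ≤ N * adicAvg N φ n (idx N n x) := by
  unfold adicAvg
  rw [pow_succ, mul_comm _ (N:ℝ), mul_assoc]
  apply mul_le_mul_of_nonneg_left _ (by positivity)
  apply mul_le_mul_of_nonneg_left _ (by positivity)
  apply setIntegral_mono_set
  · exact hi.mono_set (adic_sub N n _ hN (idx_lt N n hN x hx))
  · exact Eventually.of_forall fun _ => abs_nonneg _
  · apply LE.le.eventuallyLE
    intro y hy
    have h0 := adic_sub N (n+1) _ hN (idx_lt N (n+1) hN x hx) hy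
    have h1 := (mem_adic N (n+1) _ hN y h0.1).1 hy
    apply (mem_adic N n _ hN y h0.1).2
    rw [← idx_succ N n hN, ← idx_succ N n hN, h1]

lemma ae_lim (N : ℕ) (hN : 2 ≤ N) (φ : ℝ → ℝ) (hi : IntegrableOn (fun x => |φ x|) (Ico 0 1)) :
    ∀ᵐ x ∂(volume.restrict (Ico (0:ℝ) 1)), 
      Tendsto (fun n => adicAvg N φ n (idx N n x)) atTop (nhds |φ x|) := by
  rw [ae_restrict_iff' measurableSet_Ico]
  have hI : Integrable (indicator (Ico (0:ℝ) 1) (fun x => |φ x|)) := 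
    (integrable_indicator_iff measurableSet_Ico).2 hi
  have h := IsUnifLocDoublingMeasure.ae_tendsto_average (μ := (volume : Measure ℝ)) hI.locallyIntegrable 1
  filter_upwards [h] with x hx hx01
  have hN1 : (1:ℝ) < N := by exact_mod_cast (by omega : 1 < N)
  have h2 := hx (l := atTop) (fun n : ℕ => ((idx N n x : ℝ) + 1/2) / (N:ℝ)^n) (fun n => (1/2) / (N:ℝ)^n)
    (by
      rw [tendsto_nhdsWithin_iff]
      constructor
      · exact tendsto_const_nhds.div_atTop (tendsto_pow_atTop_atTop_of_one_lt hN1)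
      · exact Eventually.of_forall fun n => by simp only [mem_Ioi]; positivity)
    (Eventually.of_forall fun n => by
      have hmem := (mem_adic N n _ hN x hx01.1).2 rfl
      unfold adicItv at hmem
      rw [Real.closedBall_eq_Icc, one_mul, ← sub_div, ← add_div]
      refine ⟨le_trans (le_of_eq (by ring)) hmem.1, le_trans hmem.2.le (le_of_eq (by ring))⟩)
  rw [indicator_of_mem hx01] at h2
  refine h2.congr fun n => ?_
  have hb : Metric.closedBall (((idx N n x : ℝ) + 1/2) / (N:ℝ)^n) ((1/2) / (N:ℝ)^n) = 
      Icc ((idx N n x : ℝ) / (N:ℝ)^n) (((idx N n x : ℝ) + 1) / (N:ℝ)^n) := by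
    rw [Real.closedBall_eq_Icc, ← sub_div, ← add_div]
    congr 2 <;> ring
  rw [hb, setAverage_congr (Ico_ae_eq_Icc).symm]
  change (⨍ y in adicItv N n (idx N n x), _) = _
  rw [setAverage_eq, vol_adic N n _ hN, inv_inv, smul_eq_mul]
  unfold adicAvg
  congr 1
  apply setIntegral_congr_fun measurableSet_Ico
  intro y hy
  exact indicator_of_mem (adic_sub N n _ hN (idx_lt N n hN x hx01) hy) _

noncomputable def MM (N : ℕ) (φ : ℝ → ℝ) (u : ℝ) (n : ℕ) (x : ℝ) : ℝ := GG N φ u n (idx N n x)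

lemma MM_zero (N : ℕ) (φ : ℝ → ℝ) (u x : ℝ) : MM N φ u 0 x = u := rfl

lemma MM_succ (N : ℕ) (hN : 2 ≤ N) (φ : ℝ → ℝ) (u x : ℝ) (n : ℕ) : 
    MM N φ u (n+1) x = max (MM N φ u n x) (adicAvg N φ (n+1) (idx N (n+1) x)) := by
  unfold MM
  rw [GG, idx_succ N n hN]

lemma MM_ge (N : ℕ) (hN : 2 ≤ N) (φ : ℝ → ℝ) (u x : ℝ) (n : ℕ) : u ≤ MM N φ u n x := by
  induction n with
  | zero => exact le_rfl
  | succ n ih => rw [MM_succ N hN]; exact ih.trans (le_max_left _ _)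

lemma MM_mono (N : ℕ) (hN : 2 ≤ N) (φ : ℝ → ℝ) (u x : ℝ) : Monotone (fun n => MM N φ u n x) := by
  apply monotone_nat_of_le_succ
  intro n
  simp only [MM_succ N hN]
  exact le_max_left _ _

lemma MM_meas (N : ℕ) (φ : ℝ → ℝ) (u : ℝ) (n : ℕ) : Measurable (MM N φ u n) :=
  (measurable_from_nat (f := GG N φ u n)).comp (meas_idx N n)

lemma avg_zero (N : ℕ) (φ : ℝ → ℝ) (x : ℝ) (hx : x ∈ Ico (0:ℝ) 1) :
    adicAvg N φ 0 (idx N 0 x) = ∫ y in Ico (0:ℝ) 1, |φ y| := by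
  have : idx N 0 x = 0 := by
    unfold idx; simp [hx.2]
  rw [this]; unfold adicAvg adicItv; simp

lemma avg_le_MM (N : ℕ) (hN : 2 ≤ N) (φ : ℝ → ℝ) (u x : ℝ) (hx : x ∈ Ico (0:ℝ) 1)
    (hu : (∫ y in Ico (0:ℝ) 1, |φ y|) ≤ u) (n : ℕ) : 
    adicAvg N φ n (idx N n x) ≤ MM N φ u n x := by
  cases n with
  | zero => rw [avg_zero N φ x hx]; exact hu
  | succ n => rw [MM_succ N hN]; exact le_max_right _ _

lemma intA (N : ℕ) (hN : 2 ≤ N) (φ : ℝ → ℝ) (u p : ℝ) (n : ℕ) :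
    IntegrableOn (fun x => MM N φ u n x ^ p) (Ico 0 1) := by
  have := int_lvl N n hN (fun _ => 1) (by simp) (fun k => GG N φ u n k ^ p)
  simpa [MM] using this

lemma intB (N : ℕ) (hN : 2 ≤ N) (φ : ℝ → ℝ) (hi : IntegrableOn (fun x => |φ x|) (Ico 0 1)) (u p : ℝ) (n : ℕ) :
    IntegrableOn (fun x => MM N φ u n x ^ p * |φ x|) (Ico 0 1) := 
  int_lvl N n hN _ hi (fun k => GG N φ u n k ^ p)

lemma intX (N : ℕ) (hN : 2 ≤ N) (φ : ℝ → ℝ) (u p : ℝ) (n : ℕ) :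
    IntegrableOn (fun x => MM N φ u n x ^ p * adicAvg N φ n (idx N n x)) (Ico 0 1) := by
  have := int_lvl N n hN (fun _ => 1) (by simp) (fun k => GG N φ u n k ^ p * adicAvg N φ n k)
  simpa [MM] using this

lemma intX' (N : ℕ) (hN : 2 ≤ N) (φ : ℝ → ℝ) (u p : ℝ) (n : ℕ) :
    IntegrableOn (fun x => MM N φ u n x ^ p * adicAvg N φ (n+1) (idx N (n+1) x)) (Ico 0 1) := by
  have := int_lvl N (n+1) hN (fun _ => 1) (by simp) 
    (fun k => GG N φ u n (k / N) ^ p * adicAvg N φ (n+1) k)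
  simpa [idx_succ N n hN, MM] using this

lemma eqX (N : ℕ) (hN : 2 ≤ N) (φ : ℝ → ℝ) (hi : IntegrableOn (fun x => |φ x|) (Ico 0 1)) (u p : ℝ) (n : ℕ) :
    ∫ x in Ico (0:ℝ) 1, MM N φ u n x ^ p * |φ x| = 
    ∫ x in Ico (0:ℝ) 1, MM N φ u n x ^ p * adicAvg N φ n (idx N n x) := 
  (int_avg N n hN φ hi (fun k => GG N φ u n k ^ p)).symm

lemma eqX' (N : ℕ) (hN : 2 ≤ N) (φ : ℝ → ℝ) (hi : IntegrableOn (fun x => |φ x|) (Ico 0 1)) (u p : ℝ) (n : ℕ) :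
    ∫ x in Ico (0:ℝ) 1, MM N φ u n x ^ p * |φ x| = 
    ∫ x in Ico (0:ℝ) 1, MM N φ u n x ^ p * adicAvg N φ (n+1) (idx N (n+1) x) := by
  have := (int_avg N (n+1) hN φ hi (fun k => GG N φ u n (k / N) ^ p)).symm
  simpa only [idx_succ N n hN, MM] using this

lemma low_all (N : ℕ) (hN : 2 ≤ N) (φ : ℝ → ℝ) (hi : IntegrableOn (fun x => |φ x|) (Ico 0 1)) (u p : ℝ)
    (hp : 1 < p) (hu0 : 0 < u) (hu : (∫ y in Ico (0:ℝ) 1, |φ y|) ≤ u) (n : ℕ) :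
    u ^ p - (((N : ℝ) ^ p - 1) / ((N : ℝ) ^ p - N)) * (u ^ (p-1) * ∫ y in Ico (0:ℝ) 1, |φ y|) ≤
    (∫ x in Ico (0:ℝ) 1, MM N φ u n x ^ p) - (((N : ℝ) ^ p - 1) / ((N : ℝ) ^ p - N)) * 
      ∫ x in Ico (0:ℝ) 1, MM N φ u n x ^ (p-1) * |φ x| := by
  induction n with
  | zero => simp [MM_zero, integral_const_mul]
  | succ n ih =>
    refine ih.trans ?_
    rw [eqX' N hN φ hi, eqX N hN φ hi u (p-1) (n+1), ← integral_const_mul, ← integral_const_mul,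
      ← integral_sub (intA N hN φ u p n) ((intX' N hN φ u _ n).const_mul _),
      ← integral_sub (intA N hN φ u p (n+1)) ((intX N hN φ u _ (n+1)).const_mul _)]
    apply setIntegral_mono_on
    · exact (intA N hN φ u p n).sub ((intX' N hN φ u _ n).const_mul _)
    · exact (intA N hN φ u p (n+1)).sub ((intX N hN φ u _ (n+1)).const_mul _)
    · exact measurableSet_Ico
    · intro x hx
      rw [MM_succ N hN]
      apply aux_low N hN p hp
      · exact hu0.trans_le (MM_ge N hN φ u x n)
      · refine (avg_succ N n hN φ hi x hx).trans ?_
        exact mul_le_mul_of_nonneg_left (avg_le_MM N hN φ u x hx hu n) (by positivity)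

lemma up_all (N : ℕ) (hN : 2 ≤ N) (φ : ℝ → ℝ) (hi : IntegrableOn (fun x => |φ x|) (Ico 0 1)) (u p : ℝ)
    (hp : 1 < p) (hu0 : 0 < u) (n : ℕ) :
    (∫ x in Ico (0:ℝ) 1, MM N φ u n x ^ p) - (p / (p-1)) * 
      (∫ x in Ico (0:ℝ) 1, MM N φ u n x ^ (p-1) * |φ x|) ≤ 
    u ^ p - (p / (p-1)) * (u ^ (p-1) * ∫ y in Ico (0:ℝ) 1, |φ y|) := by
  induction n with
  | zero => simp [MM_zero, integral_const_mul]
  | succ n ih =>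
    refine le_trans ?_ ih
    rw [eqX' N hN φ hi u (p-1) n, eqX N hN φ hi u (p-1) (n+1), ← integral_const_mul, ← integral_const_mul,
      ← integral_sub (intA N hN φ u p n) ((intX' N hN φ u _ n).const_mul _),
      ← integral_sub (intA N hN φ u p (n+1)) ((intX N hN φ u _ (n+1)).const_mul _)]
    apply setIntegral_mono_on
    · exact (intA N hN φ u p (n+1)).sub ((intX N hN φ u _ (n+1)).const_mul _)
    · exact (intA N hN φ u p n).sub ((intX' N hN φ u _ n).const_mul _)
    · exact measurableSet_Ico
    · intro x hx
      rw [MM_succ N hN]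
      apply aux_up p hp
      exact hu0.trans_le (MM_ge N hN φ u x n)

lemma doob (N : ℕ) (hN : 2 ≤ N) (φ : ℝ → ℝ) (hi : IntegrableOn (fun x => |φ x|) (Ico 0 1)) (u p : ℝ)
    (hp : 1 < p) (hu0 : 0 < u) (hip : IntegrableOn (fun x => |φ x| ^ p) (Ico 0 1)) :
    ∃ K : ℝ, ∀ n, (∫ x in Ico (0:ℝ) 1, MM N φ u n x ^ p) ≤ K := by
  have hq : 0 < p / (p-1) := div_pos (by linarith) (by linarith)
  set q := p / (p-1) with hqd
  set e := (2 * q)⁻¹ with he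
  have he0 : 0 < e := by positivity
  refine ⟨2 * (u ^ p + q * ((e⁻¹) ^ (p-1) * ∫ x in Ico (0:ℝ) 1, |φ x| ^ p)), fun n => ?_⟩
  have h1 := up_all N hN φ hi u p hp hu0 n
  have h2 : (∫ x in Ico (0:ℝ) 1, MM N φ u n x ^ (p-1) * |φ x|) ≤ 
      e * (∫ x in Ico (0:ℝ) 1, MM N φ u n x ^ p) + (e⁻¹) ^ (p-1) * ∫ x in Ico (0:ℝ) 1, |φ x| ^ p := by
    rw [← integral_const_mul, ← integral_const_mul, 
      ← integral_add ((intA N hN φ u p n).const_mul _) (hip.const_mul _)]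
    apply integral_mono (intB N hN φ hi u _ n) (((intA N hN φ u p n).const_mul _).add (hip.const_mul _))
    intro x
    exact aux_young p hp _ _ e (hu0.le.trans (MM_ge N hN φ u x n)) (abs_nonneg _) he0
  have h3 : 0 ≤ q * (u ^ (p-1) * ∫ y in Ico (0:ℝ) 1, |φ y|) := 
    mul_nonneg hq.le (mul_nonneg (Real.rpow_nonneg hu0.le _) (integral_nonneg fun _ => abs_nonneg _))
  have h4 := mul_le_mul_of_nonneg_left h2 hq.le
  have h5 : q * e = 1/2 := by rw [he]; field_simp
  rw [mul_add, ← mul_assoc, h5] at h4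
  linarith

noncomputable def SS (N : ℕ) (φ : ℝ → ℝ) (x : ℝ) : ℝ := ⨆ n, adicAvg N φ n (idx N n x)

lemma SS_meas (N : ℕ) (φ : ℝ → ℝ) : Measurable (SS N φ) := by
  unfold SS
  apply Measurable.iSup
  intro n
  exact (measurable_from_nat (f := adicAvg N φ n)).comp (meas_idx N n)

lemma SS_eq (N : ℕ) (hN : 2 ≤ N) (φ : ℝ → ℝ) (x : ℝ) (hx : x ∈ Ico (0:ℝ) 1) : adicMax N φ x = SS N φ x := by
  unfold adicMax SS iSup
  congr 1
  ext r
  constructor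
  · rintro ⟨m, k, _, hk, rfl⟩
    rw [mem_adic N m k hN x hx.1] at hk
    exact ⟨m, by simp only [hk]⟩
  · rintro ⟨m, rfl⟩
    exact ⟨m, idx N m x, idx_lt N m hN x hx, (mem_adic N m _ hN x hx.1).2 rfl, rfl⟩

lemma lin_bd (N : ℕ) (hN : 2 ≤ N) (φ : ℝ → ℝ) (u p : ℝ)
    (hp : 1 < p) (hu0 : 0 < u) (K : ℝ) (hK : ∀ n, (∫ x in Ico (0:ℝ) 1, MM N φ u n x ^ p) ≤ K) :
    ∫⁻ x in Ico (0:ℝ) 1, ⨆ n, ENNReal.ofReal (MM N φ u n x ^ p) ≤ ENNReal.ofReal K := by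
  have hpos : ∀ n x, 0 ≤ MM N φ u n x := fun n x => hu0.le.trans (MM_ge N hN φ u x n)
  rw [lintegral_iSup]
  · apply iSup_le
    intro n
    rw [← ofReal_integral_eq_lintegral_ofReal (intA N hN φ u p n) 
      (Eventually.of_forall fun x => Real.rpow_nonneg (hpos n x) _)]
    exact ENNReal.ofReal_le_ofReal (hK n)
  · intro n
    exact ((MM_meas N φ u n).pow_const p).ennreal_ofReal
  · intro a b hab x
    exact ENNReal.ofReal_le_ofReal (Real.rpow_le_rpow (hpos a x) (MM_mono N hN φ u x hab) (by linarith))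

lemma bdd_ae (N : ℕ) (hN : 2 ≤ N) (φ : ℝ → ℝ) (u p : ℝ)
    (hp : 1 < p) (hu0 : 0 < u) (K : ℝ) (hK : ∀ n, (∫ x in Ico (0:ℝ) 1, MM N φ u n x ^ p) ≤ K) :
    ∀ᵐ x ∂(volume.restrict (Ico (0:ℝ) 1)), BddAbove (range fun n => MM N φ u n x) := by
  have hpos : ∀ n x, 0 ≤ MM N φ u n x := fun n x => hu0.le.trans (MM_ge N hN φ u x n)
  have hlin := lin_bd N hN φ u p hp hu0 K hK
  have hfin := ae_lt_top (μ := volume.restrict (Ico (0:ℝ) 1)) 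
    (f := fun x => ⨆ n, ENNReal.ofReal (MM N φ u n x ^ p))
    (Measurable.iSup fun n => ((MM_meas N φ u n).pow_const p).ennreal_ofReal) 
    (hlin.trans_lt ENNReal.ofReal_lt_top).ne
  filter_upwards [hfin] with x hx
  set T := ⨆ n, ENNReal.ofReal (MM N φ u n x ^ p) with hT
  refine ⟨T.toReal ^ (1/p), ?_⟩
  rintro _ ⟨n, rfl⟩
  simp only
  have h1 : MM N φ u n x ^ p ≤ T.toReal := by
    rw [← ENNReal.ofReal_le_iff_le_toReal hx.ne]
    exact le_iSup (fun n => ENNReal.ofReal (MM N φ u n x ^ p)) n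
  calc MM N φ u n x = (MM N φ u n x ^ p) ^ (1/p) := by
        rw [← Real.rpow_mul (hpos n x), mul_one_div_cancel (by linarith), Real.rpow_one]
    _ ≤ _ := Real.rpow_le_rpow (Real.rpow_nonneg (hpos n x) _) h1 (by positivity)

lemma MM_lim (N : ℕ) (hN : 2 ≤ N) (φ : ℝ → ℝ) (u x : ℝ) (hx : x ∈ Ico (0:ℝ) 1)
    (hu : (∫ y in Ico (0:ℝ) 1, |φ y|) ≤ u) (hb : BddAbove (range fun n => MM N φ u n x)) :
    Tendsto (fun n => MM N φ u n x) atTop (nhds (max u (SS N φ x))) := by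
  have h := tendsto_atTop_ciSup (MM_mono N hN φ u x) hb
  convert h using 2
  have hb2 : BddAbove (range fun n => adicAvg N φ n (idx N n x)) := by
    obtain ⟨B, hB⟩ := hb
    refine ⟨B, ?_⟩
    rintro _ ⟨n, rfl⟩
    exact (avg_le_MM N hN φ u x hx hu n).trans (hB ⟨n, rfl⟩)
  apply le_antisymm
  · apply max_le
    · exact le_ciSup hb 0
    · apply ciSup_le
      intro n
      exact (avg_le_MM N hN φ u x hx hu n).trans (le_ciSup hb n)
  · apply ciSup_le
    intro n
    induction n with
    | zero => exact le_max_left _ _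
    | succ n ih =>
      rw [MM_succ N hN]
      exact max_le ih ((le_ciSup hb2 (n+1)).trans (le_max_right _ _))

theorem stmt6 (N : ℕ) (hN : 2 ≤ N) (p f F : ℝ) (hp : 1 < p)
    (hf : 0 < f) (hF : 0 < F) (hfF : f ^ p ≤ F)
    (φ : ℝ → ℝ) (hφm : Measurable φ) (hφ0 : ∀ x ∈ Set.Ico (0:ℝ) 1, 0 ≤ φ x)
    (hφ1 : (∫ x in Set.Ico (0:ℝ) 1, φ x) = f)
    (hφp : (∫ x in Set.Ico (0:ℝ) 1, φ x ^ p) = F)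
    (u : ℝ) (hu : f ≤ u) :
    (∫ x in {x ∈ Set.Ico (0:ℝ) 1 | u < adicMax N φ x}, adicMax N φ x ^ p) ≥
      (volume {x ∈ Set.Ico (0:ℝ) 1 | u < adicMax N φ x}).toReal * u ^ p +
        (((N : ℝ) ^ p - 1) / ((N : ℝ) ^ p - N)) * max (F - u ^ (p - 1) * f) 0 := by
  have hN' : (2:ℝ) ≤ N := by exact_mod_cast hN
  have hNp : (N:ℝ) < (N:ℝ) ^ p := by
    have := Real.rpow_lt_rpow_of_exponent_lt (x := (N:ℝ)) (by linarith) hp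
    simpa using this
  have hu0 : 0 < u := hf.trans_le hu
  have habs : ∀ x ∈ Ico (0:ℝ) 1, |φ x| = φ x := fun x hx => abs_of_nonneg (hφ0 x hx)
  have e1 : ∫ x in Ico (0:ℝ) 1, |φ x| = f := by
    rw [← hφ1]; exact setIntegral_congr_fun measurableSet_Ico habs
  have e2 : ∫ x in Ico (0:ℝ) 1, |φ x| ^ p = F := by
    rw [← hφp]; exact setIntegral_congr_fun measurableSet_Ico (fun x hx => by simp only [habs x hx])
  have hi : IntegrableOn (fun x => |φ x|) (Ico 0 1) := by
    by_contra h
    rw [integral_undef h] at e1; linarith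
  have hip : IntegrableOn (fun x => |φ x| ^ p) (Ico 0 1) := by
    by_contra h
    rw [integral_undef h] at e2; linarith
  have hu1 : (∫ x in Ico (0:ℝ) 1, |φ x|) ≤ u := by rw [e1]; exact hu
  obtain ⟨K, hK⟩ := doob N hN φ hi u p hp hu0 hip
  set W : ℝ → ℝ := fun x => max u (SS N φ x) with hW
  have hWm : Measurable W := measurable_const.max (SS_meas N φ)
  have hWu : ∀ x, u ≤ W x := fun x => le_max_left _ _
  have hW0 : ∀ x, 0 < W x := fun x => hu0.trans_le (hWu x)
  have hM0 : ∀ n x, 0 < MM N φ u n x := fun n x => hu0.trans_le (MM_ge N hN φ u x n)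
  have hlim : ∀ᵐ x ∂(volume.restrict (Ico (0:ℝ) 1)), 
      Tendsto (fun n => MM N φ u n x) atTop (nhds (W x)) := by
    filter_upwards [bdd_ae N hN φ u p hp hu0 K hK, ae_restrict_mem measurableSet_Ico] with x hx hx1
    exact MM_lim N hN φ u x hx1 hu1 hx
  have hMW : ∀ᵐ x ∂(volume.restrict (Ico (0:ℝ) 1)), ∀ n, MM N φ u n x ≤ W x := by
    filter_upwards [hlim] with x hx n
    exact (MM_mono N hN φ u x).ge_of_tendsto hx n
  have hφW : ∀ᵐ x ∂(volume.restrict (Ico (0:ℝ) 1)), |φ x| ≤ W x := by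
    filter_upwards [hMW, ae_lim N hN φ hi, ae_restrict_mem measurableSet_Ico] with x hx hx1 hx2
    exact le_of_tendsto' hx1 fun n => (avg_le_MM N hN φ u x hx2 hu1 n).trans (hx n)
  have hWi : IntegrableOn (fun x => W x ^ p) (Ico 0 1) := by
    refine ⟨(hWm.pow_const p).aestronglyMeasurable, ?_⟩
    rw [hasFiniteIntegral_iff_ofReal (Eventually.of_forall fun x => Real.rpow_nonneg (hW0 x).le _)]
    refine lt_of_le_of_lt ?_ ((lin_bd N hN φ u p hp hu0 K hK).trans_lt ENNReal.ofReal_lt_top)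
    apply lintegral_mono_ae
    filter_upwards [hlim] with x hx
    have h1 : Tendsto (fun n => ENNReal.ofReal (MM N φ u n x ^ p)) atTop (nhds (ENNReal.ofReal (W x ^ p))) :=
      ENNReal.tendsto_ofReal (hx.rpow_const (Or.inl (hW0 x).ne'))
    exact le_of_tendsto' h1 fun n => le_iSup (fun n => ENNReal.ofReal (MM N φ u n x ^ p)) n
  set C := (((N : ℝ) ^ p - 1) / ((N : ℝ) ^ p - N)) with hC
  have hC0 : 0 ≤ C := div_nonneg (by linarith) (by linarith)
  have hpw : ∀ z : ℝ, 0 ≤ z → z ^ (p-1) * z = z ^ p := by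
    intro z hz
    rcases hz.eq_or_lt with rfl | hz
    · rw [Real.zero_rpow (by linarith), Real.zero_rpow (by linarith)]; simp
    · rw [← Real.rpow_add_one hz.ne']; ring_nf
  have hdom : ∀ᵐ x ∂(volume.restrict (Ico (0:ℝ) 1)), W x ^ (p-1) * |φ x| ≤ W x ^ p := by
    filter_upwards [hφW] with x hx
    rw [← hpw _ (hW0 x).le]
    exact mul_le_mul_of_nonneg_left hx (Real.rpow_nonneg (hW0 x).le _)
  have habsm : Measurable (fun x => |φ x|) := hφm.abs
  have hWφi : IntegrableOn (fun x => W x ^ (p-1) * |φ x|) (Ico 0 1) := by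
    refine Integrable.mono' hWi ((hWm.pow_const _).mul habsm).aestronglyMeasurable ?_
    filter_upwards [hdom] with x hx
    rw [Real.norm_of_nonneg (mul_nonneg (Real.rpow_nonneg (hW0 x).le _) (abs_nonneg _))]
    exact hx
  have hDCT : Tendsto (fun n => ∫ x in Ico (0:ℝ) 1, MM N φ u n x ^ (p-1) * |φ x|) atTop 
      (nhds (∫ x in Ico (0:ℝ) 1, W x ^ (p-1) * |φ x|)) := by
    apply tendsto_integral_of_dominated_convergence (fun x => W x ^ (p-1) * |φ x|)
    · intro n; exact (intB N hN φ hi u _ n).aestronglyMeasurable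
    · exact hWφi
    · intro n
      filter_upwards [hMW] with x hx
      rw [Real.norm_of_nonneg (mul_nonneg (Real.rpow_nonneg (hM0 n x).le _) (abs_nonneg _))]
      exact mul_le_mul_of_nonneg_right (Real.rpow_le_rpow (hM0 n x).le (hx n) (by linarith)) (abs_nonneg _)
    · filter_upwards [hlim] with x hx
      exact (hx.rpow_const (Or.inl (hW0 x).ne')).mul_const _
  have hstep : ∀ n, C * (∫ x in Ico (0:ℝ) 1, MM N φ u n x ^ (p-1) * |φ x|) ≤ 
      (∫ x in Ico (0:ℝ) 1, W x ^ p) - u ^ p + C * (u ^ (p-1) * f) := by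
    intro n
    have h1 := low_all N hN φ hi u p hp hu0 hu1 n
    rw [e1] at h1
    have h2 : (∫ x in Ico (0:ℝ) 1, MM N φ u n x ^ p) ≤ ∫ x in Ico (0:ℝ) 1, W x ^ p := by
      apply integral_mono_ae (intA N hN φ u p n) hWi
      filter_upwards [hMW] with x hx
      exact Real.rpow_le_rpow (hM0 n x).le (hx n) (by linarith)
    linarith
  have hfin := le_of_tendsto' (hDCT.const_mul C) hstep
  have hFle : F ≤ ∫ x in Ico (0:ℝ) 1, W x ^ (p-1) * |φ x| := by
    rw [← e2]
    apply integral_mono_ae hip hWφi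
    filter_upwards [hφW] with x hx
    rw [← hpw _ (abs_nonneg (φ x))]
    exact mul_le_mul_of_nonneg_right (Real.rpow_le_rpow (abs_nonneg _) hx (by linarith)) (abs_nonneg _)
  have hmain : u ^ p + C * (F - u ^ (p-1) * f) ≤ ∫ x in Ico (0:ℝ) 1, W x ^ p := by
    nlinarith [mul_le_mul_of_nonneg_left hFle hC0]
  have hA : {x ∈ Ico (0:ℝ) 1 | u < adicMax N φ x} = Ico 0 1 ∩ {x | u < SS N φ x} := by
    ext x
    simp only [mem_ofPred_eq, mem_inter_iff]
    exact and_congr_right fun hx => by rw [SS_eq N hN φ x hx]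
  have hSm : MeasurableSet {x | u < SS N φ x} := measurableSet_lt measurable_const (SS_meas N φ)
  rw [hA]
  set A := Ico (0:ℝ) 1 ∩ {x | u < SS N φ x} with hAd
  have hAm : MeasurableSet A := measurableSet_Ico.inter hSm
  have hAs : A ⊆ Ico 0 1 := inter_subset_left
  have e3 : ∫ x in A, adicMax N φ x ^ p = ∫ x in A, W x ^ p := by
    apply setIntegral_congr_fun hAm
    intro x hx
    have : u < SS N φ x := hx.2
    simp only [hW]
    rw [SS_eq N hN φ x hx.1, max_eq_right this.le]
  rw [e3]
  have hAfin : volume A ≠ ⊤ := ((measure_mono hAs).trans_lt (by simp)).ne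
  have e4 : ∫ x in Ico (0:ℝ) 1, (W x ^ p - u ^ p) = ∫ x in A, (W x ^ p - u ^ p) := by
    apply setIntegral_eq_of_subset_of_forall_sdiff_eq_zero measurableSet_Ico hAs
    rintro x ⟨hx, hxA⟩
    have : SS N φ x ≤ u := by
      by_contra h; push Not at h; exact hxA ⟨hx, h⟩
    simp only [hW]
    rw [max_eq_left this, sub_self]
  rw [integral_sub hWi (by simp), integral_sub (hWi.mono_set hAs) (integrableOn_const hAfin)] at e4
  simp only [integral_const, MeasurableSet.univ, measureReal_restrict_apply, univ_inter, smul_eq_mul] at e4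
  have e5 : volume.real (Ico (0:ℝ) 1) = 1 := by simp
  rw [e5, one_mul] at e4
  have h7 : (volume A).toReal * u ^ p ≤ ∫ x in A, W x ^ p := by
    have := setIntegral_mono_on (μ := volume) (s := A) (f := fun _ => u ^ p) (g := fun x => W x ^ p) 
      (integrableOn_const hAfin) (hWi.mono_set hAs) hAm
      (fun x _ => Real.rpow_le_rpow hu0.le (hWu x) (by linarith))
    simpa [Measure.real] using this
  change (volume A).toReal * u ^ p + C * max (F - u ^ (p - 1) * f) 0 ≤ _
  rcases le_total (F - u ^ (p-1) * f) 0 with h | h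
  · rw [max_eq_right h, mul_zero, add_zero]; exact h7
  · rw [max_eq_left h]
    change _ = _ - (volume A).toReal * _ at e4
    linarith
end

section
/- Let N ≥ 2 be an integer, let p > 1 and 0 < q < p, and let f, F > 0 satisfy f^p ≤ F. Then the infimum of ∫_{[0,1)} (M_N φ)^q dμ over all nonnegative measurable φ on [0,1) with ∫ φ dμ = f and ∫ φ^p dμ = F equals f^q. -/
open MeasureTheory Set Filter

open scoped ENNReal

lemma adicItv_subset {N m k : ℕ} (hN : 0 < N) (hk : k < N ^ m) : adicItv N m k ⊆ Ico (0:ℝ) 1 := by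
  intro x hx
  have hP : (0:ℝ) < (N:ℝ) ^ m := by positivity
  have hk' : (k:ℝ) + 1 ≤ (N:ℝ)^m := by exact_mod_cast hk
  refine ⟨le_trans (by positivity) hx.1, lt_of_lt_of_le hx.2 ?_⟩
  rw [div_le_one hP]; exact hk'

lemma adicItv_meas (N m k : ℕ) : MeasurableSet (adicItv N m k) := measurableSet_Ico

lemma adicItv_vol (N m k : ℕ) : volume (adicItv N m k) = ENNReal.ofReal (((N:ℝ)^m)⁻¹) := by
  unfold adicItv
  rw [Real.volume_Ico]
  congr 1
  ring

lemma weak_type (N : ℕ) (hN : 0 < N) (G : ℝ → ℝ≥0∞) (L : ℝ≥0∞) :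
    L * volume {x | ∃ m k, k < N ^ m ∧ x ∈ adicItv N m k ∧
      L * volume (adicItv N m k) ≤ ∫⁻ y in adicItv N m k, G y} ≤
    5 * ∫⁻ y in Ico (0:ℝ) 1, G y := by
  let t : Set (ℕ × ℕ) := {i | i.2 < N ^ i.1 ∧
    L * volume (adicItv N i.1 i.2) ≤ ∫⁻ y in adicItv N i.1 i.2, G y}
  let c : ℕ × ℕ → ℝ := fun i => ((i.2:ℝ) + 1/2) / (N:ℝ)^i.1
  let r : ℕ × ℕ → ℝ := fun i => ((N:ℝ)^i.1)⁻¹ / 2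
  have hP : ∀ m, (0:ℝ) < (N:ℝ) ^ m := fun m => by positivity
  have hsub : ∀ i, adicItv N i.1 i.2 ⊆ Metric.closedBall (c i) (r i) := by
    intro i
    rw [Real.closedBall_eq_Icc]
    refine Ico_subset_Icc_self.trans (Icc_subset_Icc ?_ ?_)
    · apply le_of_eq; simp only [c, r]; ring
    · apply le_of_eq; simp only [c, r]; ring
  obtain ⟨u, hut, hud, huc⟩ := Vitali.exists_disjoint_subfamily_covering_enlargement_closedBall
    t c r 1 (by
      intro i _
      have h1 : (1:ℝ) ≤ (N:ℝ)^i.1 := one_le_pow₀ (by exact_mod_cast hN)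
      have := inv_le_one_of_one_le₀ h1
      simp only [r]; linarith) 5 (by norm_num)
  have hcov : {x | ∃ m k, k < N ^ m ∧ x ∈ adicItv N m k ∧
      L * volume (adicItv N m k) ≤ ∫⁻ y in adicItv N m k, G y} ⊆
      ⋃ i ∈ u, Metric.closedBall (c i) (5 * r i) := by
    rintro x ⟨m, k, hk, hx, hL⟩
    obtain ⟨b, hb, hb'⟩ := huc (m, k) ⟨hk, hL⟩
    exact mem_biUnion hb (hb' (hsub (m,k) hx))
  have hvol : ∀ i, volume (Metric.closedBall (c i) (5 * r i)) = 5 * volume (adicItv N i.1 i.2) := by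
    intro i
    rw [Real.volume_closedBall, adicItv_vol,
      show (5:ℝ≥0∞) = ENNReal.ofReal 5 by simp, ← ENNReal.ofReal_mul (by norm_num)]
    congr 1; simp only [r]; ring
  have hd : u.PairwiseDisjoint fun i => adicItv N i.1 i.2 :=
    hud.mono_on fun i _ => hsub i
  calc _ ≤ L * volume (⋃ i ∈ u, Metric.closedBall (c i) (5 * r i)) := by gcongr
    _ ≤ L * ∑' i : u, volume (Metric.closedBall (c i) (5 * r i)) := by
        gcongr; exact measure_biUnion_le _ (to_countable u) _
    _ = 5 * ∑' i : u, L * volume (adicItv N (i:ℕ×ℕ).1 (i:ℕ×ℕ).2) := by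
        simp_rw [hvol]
        rw [ENNReal.tsum_mul_left, ENNReal.tsum_mul_left]; ring
    _ ≤ 5 * ∑' i : u, ∫⁻ y in adicItv N (i:ℕ×ℕ).1 (i:ℕ×ℕ).2, G y := by
        gcongr with i; exact (hut i.2).2
    _ = 5 * ∫⁻ y in ⋃ i ∈ u, adicItv N i.1 i.2, G y := by
        rw [lintegral_biUnion (to_countable u) (fun i _ => adicItv_meas _ _ _) hd]
    _ ≤ _ := by
        gcongr
        exact iUnion₂_subset fun i hi => adicItv_subset hN (hut hi).1

lemma vol01 : volume (Ico (0:ℝ) 1) = 1 := by simp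

/-- Jensen on an adic interval. -/
lemma jensen_adic {N m k : ℕ} (hN : 0 < N) (hk : k < N ^ m) {p : ℝ} (hp : 1 < p) {φ : ℝ → ℝ}
    (h0 : ∀ x ∈ Ico (0:ℝ) 1, 0 ≤ φ x) (hi : IntegrableOn φ (Ico 0 1))
    (hip : IntegrableOn (fun x => φ x ^ p) (Ico 0 1)) :
    (adicAvg N φ m k) ^ p ≤ (N:ℝ)^m * ∫ y in adicItv N m k, φ y ^ p := by
  have hP : (0:ℝ) < (N:ℝ) ^ m := by positivity
  have hs := adicItv_subset hN hk
  have hv := adicItv_vol N m k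
  have hJ := (convexOn_rpow hp.le).map_set_average_le (μ := volume) (t := adicItv N m k) (f := φ)
    (Real.continuous_rpow_const (by linarith)).continuousOn isClosed_Ici
    (by rw [hv]; simp [hP]) (by rw [hv]; simp)
    (ae_restrict_of_forall_mem (adicItv_meas _ _ _) fun x hx => h0 x (hs hx))
    (hi.mono_set hs) (hip.mono_set hs)
  have hr : volume.real (adicItv N m k) = ((N:ℝ)^m)⁻¹ := by
    rw [Measure.real, hv, ENNReal.toReal_ofReal (by positivity)]
  rw [setAverage_eq, setAverage_eq, hr, inv_inv, smul_eq_mul, smul_eq_mul] at hJ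
  have : adicAvg N φ m k = (N:ℝ)^m * ∫ y in adicItv N m k, φ y := by
    unfold adicAvg
    congr 1
    exact setIntegral_congr_fun (adicItv_meas _ _ _) fun x hx => abs_of_nonneg (h0 x (hs hx))
  rw [this]; exact hJ

lemma weak_p {N : ℕ} (hN : 0 < N) {p : ℝ} (hp : 1 < p) {φ : ℝ → ℝ}
    (h0 : ∀ x ∈ Ico (0:ℝ) 1, 0 ≤ φ x) (hi : IntegrableOn φ (Ico 0 1))
    (hip : IntegrableOn (fun x => φ x ^ p) (Ico 0 1)) {s : ℝ} (hs : 0 < s) :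
    volume {x | ∃ m k, k < N ^ m ∧ x ∈ adicItv N m k ∧ s ≤ adicAvg N φ m k} ≤
      ENNReal.ofReal (5 * (∫ x in Ico (0:ℝ) 1, φ x ^ p) * s ^ (-p)) := by
  have hsp : 0 < s ^ p := Real.rpow_pos_of_pos hs p
  have h := weak_type N hN (fun x => ENNReal.ofReal (φ x ^ p)) (ENNReal.ofReal (s ^ p))
  have hI : ∀ S ⊆ Ico (0:ℝ) 1, MeasurableSet S →
      ∫⁻ y in S, ENNReal.ofReal (φ y ^ p) = ENNReal.ofReal (∫ y in S, φ y ^ p) := by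
    intro S hS hm
    rw [ofReal_integral_eq_lintegral_ofReal (hip.mono_set hS)]
    exact ae_restrict_of_forall_mem hm fun x hx => Real.rpow_nonneg (h0 x (hS hx)) _
  rw [hI _ subset_rfl measurableSet_Ico] at h
  have hsub : {x | ∃ m k, k < N ^ m ∧ x ∈ adicItv N m k ∧ s ≤ adicAvg N φ m k} ⊆
     {x | ∃ m k, k < N ^ m ∧ x ∈ adicItv N m k ∧
      ENNReal.ofReal (s ^ p) * volume (adicItv N m k) ≤
        ∫⁻ y in adicItv N m k, ENNReal.ofReal (φ y ^ p)} := by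
    rintro x ⟨m, k, hk, hx, hL⟩
    refine ⟨m, k, hk, hx, ?_⟩
    rw [hI _ (adicItv_subset hN hk) (adicItv_meas _ _ _), adicItv_vol, ← ENNReal.ofReal_mul hsp.le]
    apply ENNReal.ofReal_le_ofReal
    have hP : (0:ℝ) < (N:ℝ) ^ m := by positivity
    rw [← div_eq_mul_inv, div_le_iff₀ hP, mul_comm]
    exact (Real.rpow_le_rpow hs.le hL (by linarith)).trans (jensen_adic hN hk hp h0 hi hip)
  have h2 := (mul_le_mul_right (measure_mono hsub) (ENNReal.ofReal (s ^ p))).trans h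
  have hne : ENNReal.ofReal (s ^ p) ≠ 0 := by simpa using hsp
  rw [mul_comm, ← ENNReal.le_div_iff_mul_le (Or.inl hne) (Or.inl ENNReal.ofReal_ne_top)] at h2
  refine h2.trans (le_of_eq ?_)
  rw [show (5:ℝ≥0∞) = ENNReal.ofReal 5 by simp, ← ENNReal.ofReal_mul (by norm_num),
    ← ENNReal.ofReal_div_of_pos hsp, Real.rpow_neg hs.le]
  rfl

lemma adicAvg_nonneg (N : ℕ) (φ : ℝ → ℝ) (m k : ℕ) : 0 ≤ adicAvg N φ m k := by
  unfold adicAvg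
  have : 0 ≤ ∫ y in adicItv N m k, |φ y| := integral_nonneg fun _ => abs_nonneg _
  positivity

lemma adicMax_nonneg (N : ℕ) (φ : ℝ → ℝ) (x : ℝ) : 0 ≤ adicMax N φ x := by
  apply Real.sSup_nonneg
  rintro r ⟨m, k, -, -, rfl⟩
  exact adicAvg_nonneg _ _ _ _

lemma adicMax_eq {N : ℕ} (hN : 0 < N) (φ : ℝ → ℝ) {x : ℝ} (hx : x ∈ Ico (0:ℝ) 1) :
    adicMax N φ x = ⨆ m : ℕ, adicAvg N φ m ⌊x * (N:ℝ)^m⌋₊ := by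
  unfold adicMax iSup
  congr 1
  ext r
  have hP : ∀ m, (0:ℝ) < (N:ℝ) ^ m := fun m => by positivity
  have hiff : ∀ m k : ℕ, x ∈ adicItv N m k ↔ ⌊x * (N:ℝ)^m⌋₊ = k := by
    intro m k
    rw [Nat.floor_eq_iff (mul_nonneg hx.1 (hP m).le)]
    unfold adicItv
    rw [mem_Ico, div_le_iff₀ (hP m), lt_div_iff₀ (hP m)]
  constructor
  · rintro ⟨m, k, hk, hxk, rfl⟩
    exact ⟨m, by simp only [(hiff m k).1 hxk]⟩
  · rintro ⟨m, rfl⟩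
    refine ⟨m, _, ?_, (hiff m _).2 rfl, rfl⟩
    rw [Nat.floor_lt (mul_nonneg hx.1 (hP m).le)]
    push_cast
    have := mul_lt_mul_of_pos_right hx.2 (hP m)
    linarith

lemma adicMax_aemeas {N : ℕ} (hN : 0 < N) (φ : ℝ → ℝ) :
    AEMeasurable (adicMax N φ) (volume.restrict (Ico (0:ℝ) 1)) := by
  have h1 : Measurable fun x : ℝ => ⨆ m : ℕ, adicAvg N φ m ⌊x * (N:ℝ)^m⌋₊ := by
    apply Measurable.iSup
    intro m
    have h2 : Measurable fun x : ℝ => ⌊x * (N:ℝ)^m⌋₊ :=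
      Nat.measurable_floor.comp (measurable_id.mul_const _)
    exact (measurable_from_nat (f := fun k => adicAvg N φ m k)).comp h2
  refine ⟨_, h1, ?_⟩
  exact ae_restrict_of_forall_mem measurableSet_Ico fun x hx => adicMax_eq hN φ hx

lemma lower_bd {N : ℕ} (hN : 0 < N) {p q f : ℝ} (hp : 1 < p) (hq0 : 0 < q) (hqp : q < p)
    (hf : 0 < f) {φ : ℝ → ℝ}
    (h0 : ∀ x ∈ Ico (0:ℝ) 1, 0 ≤ φ x) (hi : IntegrableOn φ (Ico 0 1))
    (hip : IntegrableOn (fun x => φ x ^ p) (Ico 0 1)) (hφ : ∫ x in Ico (0:ℝ) 1, φ x = f) :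
    f ^ q ≤ ∫ x in Ico (0:ℝ) 1, adicMax N φ x ^ q := by
  set F := ∫ x in Ico (0:ℝ) 1, φ x ^ p with hFdef
  have hF0 : 0 ≤ F := setIntegral_nonneg measurableSet_Ico fun x hx => Real.rpow_nonneg (h0 x hx) _
  set E : ℝ → Set ℝ := fun s => {x | ∃ m k, k < N ^ m ∧ x ∈ adicItv N m k ∧ s ≤ adicAvg N φ m k}
    with hE
  have hEw : ∀ s, 0 < s → volume (E s) ≤ ENNReal.ofReal (5 * F * s ^ (-p)) :=
    fun s hs => weak_p hN hp h0 hi hip hs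
  set S : ℝ → Set ℝ :=
    fun x => {r : ℝ | ∃ m k : ℕ, k < N ^ m ∧ x ∈ adicItv N m k ∧ r = adicAvg N φ m k} with hS
  have hbdd : ∀ᵐ x, BddAbove (S x) := by
    rw [ae_iff]
    have hle : ∀ᶠ s : ℝ in atTop,
        volume {x | ¬ BddAbove (S x)} ≤ ENNReal.ofReal (5 * F * s ^ (-p)) := by
      filter_upwards [eventually_gt_atTop 0] with s hs
      refine (measure_mono ?_).trans (hEw s hs)
      intro x hx
      rw [mem_ofPred_eq, not_bddAbove_iff] at hx
      obtain ⟨r, ⟨m, k, hk, hxk, rfl⟩, hr⟩ := hx s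
      exact ⟨m, k, hk, hxk, hr.le⟩
    have ht : Tendsto (fun s : ℝ => ENNReal.ofReal (5 * F * s ^ (-p))) atTop (nhds 0) := by
      have := (tendsto_rpow_neg_atTop (y := p) (by linarith)).const_mul (5 * F)
      rw [mul_zero] at this
      simpa using ENNReal.tendsto_ofReal this
    exact le_antisymm (ge_of_tendsto ht hle) bot_le
  have hlt : ∀ s, 0 < s → {x | s < adicMax N φ x} ⊆ E s := by
    intro s hs x hx
    have hne : (S x).Nonempty := by
      by_contra hne
      rw [not_nonempty_iff_eq_empty] at hne
      have : adicMax N φ x = 0 := by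
        unfold adicMax
        rw [show {r : ℝ | ∃ m k : ℕ, k < N ^ m ∧ x ∈ adicItv N m k ∧ r = adicAvg N φ m k} = ∅
          from hne, Real.sSup_empty]
      rw [mem_ofPred_eq, this] at hx
      linarith
    obtain ⟨r, ⟨m, k, hk, hxk, rfl⟩, hr⟩ := exists_lt_of_lt_csSup hne hx
    exact ⟨m, k, hk, hxk, hr.le⟩
  have hmeas := adicMax_aemeas hN φ
  have hnn : ∀ x, 0 ≤ adicMax N φ x := adicMax_nonneg N φ
  have hint : IntegrableOn (fun x => adicMax N φ x ^ q) (Ico 0 1) := by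
    refine ⟨(hmeas.pow_const q).aestronglyMeasurable, ?_⟩
    rw [hasFiniteIntegral_iff_ofReal (Eventually.of_forall fun x => Real.rpow_nonneg (hnn x) q),
      lintegral_rpow_eq_lintegral_meas_lt_mul _ (Eventually.of_forall hnn) hmeas hq0]
    refine ENNReal.mul_lt_top ENNReal.ofReal_lt_top ?_
    rw [← Ioc_union_Ioi_eq_Ioi zero_le_one]
    refine (lintegral_union_le _ _ _).trans_lt (ENNReal.add_lt_top.2 ⟨?_, ?_⟩)
    · have hI : IntegrableOn (fun t : ℝ => t ^ (q - 1)) (Ioc 0 1) :=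
        (intervalIntegrable_iff_integrableOn_Ioc_of_le zero_le_one).1
          (intervalIntegral.intervalIntegrable_rpow' (by linarith))
      refine lt_of_le_of_lt (lintegral_mono fun t => ?_) hI.lintegral_lt_top
      refine (mul_le_mul_left ?_ _).trans_eq (one_mul _)
      refine (measure_mono (subset_univ _)).trans ?_
      simp
    · have hI : IntegrableOn (fun t : ℝ => 5 * F * t ^ (q - 1 - p)) (Ioi 1) :=
        (integrableOn_Ioi_rpow_of_lt (by linarith) one_pos).const_mul _
      refine lt_of_le_of_lt (setLIntegral_mono' measurableSet_Ioi fun t ht => ?_) hI.lintegral_lt_top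
      have ht0 : (0:ℝ) < t := lt_trans one_pos ht
      refine (mul_le_mul_left ((Measure.restrict_apply_le _ _).trans
        ((measure_mono (hlt t ht0)).trans (hEw t ht0))) _).trans_eq ?_
      rw [← ENNReal.ofReal_mul (by positivity), mul_assoc, ← Real.rpow_add ht0]
      congr 3; ring
  have hge : ∀ᵐ x ∂(volume.restrict (Ico (0:ℝ) 1)), f ^ q ≤ adicMax N φ x ^ q := by
    filter_upwards [ae_restrict_of_ae hbdd, ae_restrict_mem measurableSet_Ico] with x hb hx
    refine Real.rpow_le_rpow hf.le ?_ hq0.le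
    refine le_csSup hb ⟨0, 0, by simp, ?_, ?_⟩
    · simpa [adicItv] using hx
    · have : adicItv N 0 0 = Ico (0:ℝ) 1 := by simp [adicItv]
      unfold adicAvg
      rw [this, ← hφ, pow_zero, one_mul]
      exact setIntegral_congr_fun measurableSet_Ico fun x hx => (abs_of_nonneg (h0 x hx)).symm
  have := integral_mono_ae (integrable_const (f ^ q)) hint hge
  simpa using this

lemma int_step {u v a c δ : ℝ} (huv : u ≤ v) :
    ∫ x in Ico u v, (a + (Iio δ).indicator (fun _ => c) x) =
      a * (v - u) + c * max (min v δ - u) 0 := by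
  have hI : Integrable ((Iio δ).indicator (fun _ => c)) (volume.restrict (Ico u v)) :=
    (integrable_const c).indicator measurableSet_Iio
  rw [integral_add (integrable_const a) hI, integral_indicator measurableSet_Iio,
    Measure.restrict_restrict measurableSet_Iio, setIntegral_const, setIntegral_const]
  have h1 : Iio δ ∩ Ico u v = Ico u (min v δ) := by
    ext x; simp only [mem_inter_iff, mem_Iio, mem_Ico, lt_min_iff]; tauto
  rw [h1, Measure.real, Measure.real, Real.volume_Ico, Real.volume_Ico,
    ENNReal.toReal_ofReal (by linarith)]
  simp only [smul_eq_mul, ENNReal.ofReal, ENNReal.coe_toReal, Real.coe_toNNReal']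
  ring

lemma step_avg {u v x δ : ℝ} (hu : 0 ≤ u) (hx : x ∈ Ico u v) (hx0 : 0 < x) (hδ : 0 < δ) :
    max (min v δ - u) 0 ≤ (v - u) * min 1 (δ / x) := by
  have huv : 0 < v - u := by linarith [hx.1, hx.2]
  have hdx : 0 < δ / x := by positivity
  apply max_le
  · rcases le_total x δ with h | h
    · rw [min_eq_left ((one_le_div hx0).2 h)]
      linarith [min_le_left v δ]
    · rw [min_eq_right ((div_le_one hx0).2 h), min_eq_right (h.trans hx.2.le), mul_div_assoc',
        le_div_iff₀ hx0]
      rcases le_total δ u with h' | h'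
      · nlinarith [mul_nonneg (sub_nonneg.2 h') hx0.le, mul_pos huv hδ]
      · nlinarith [mul_nonneg (sub_nonneg.2 h') (sub_nonneg.2 hx.2.le),
          mul_nonneg hu (sub_nonneg.2 (h.trans hx.2.le))]
  · positivity

lemma exists_phi {N : ℕ} (hN : 0 < N) {p f F δ : ℝ} (hp : 1 < p)
    (hf : 0 < f) (hF : 0 < F) (hfF : f ^ p ≤ F) (hδ : 0 < δ) (hδ1 : δ < 1)
    (hδF : F ≤ f ^ p * δ ^ (1 - p)) :
    ∃ φ : ℝ → ℝ, Measurable φ ∧ (∀ x ∈ Ico (0:ℝ) 1, 0 ≤ φ x) ∧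
      (∫ x in Ico (0:ℝ) 1, φ x) = f ∧ (∫ x in Ico (0:ℝ) 1, φ x ^ p) = F ∧
      ∀ x ∈ Ioo (0:ℝ) 1, adicMax N φ x ≤ f + F ^ (1/p) * (δ ^ (-(1/p)) * min 1 (δ / x)) := by
  have hp0 : 0 < p := by linarith
  have hcp : Continuous fun y : ℝ => y ^ p := Real.continuous_rpow_const hp0.le
  let h : ℝ → ℝ := fun b => (f - b * δ) ^ p * (1 - δ) + δ * (f - b * δ + b) ^ p
  have hc : Continuous h := by
    refine ((hcp.comp (f := fun b : ℝ => f - b * δ) (by fun_prop)).mul_const _).add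
      ((hcp.comp (f := fun b : ℝ => f - b * δ + b) (by fun_prop)).const_mul _)
  have h_zero : h 0 ≤ F := by
    have : h 0 = f ^ p := by simp only [h]; simp; ring
    linarith
  have h_one : F ≤ h (f / δ) := by
    have : h (f / δ) = f ^ p * δ ^ (1 - p) := by
      simp only [h]
      rw [div_mul_cancel₀ _ hδ.ne', sub_self, Real.zero_rpow hp0.ne', zero_mul, zero_add, zero_add,
        Real.div_rpow hf.le hδ.le, Real.rpow_sub hδ, Real.rpow_one]
      ring
    linarith
  obtain ⟨b, ⟨hb0, hb1⟩, hb⟩ := intermediate_value_Icc (by positivity : 0 ≤ f / δ)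
    hc.continuousOn ⟨h_zero, h_one⟩
  have hbδ : b * δ ≤ f := (le_div_iff₀ hδ).1 hb1
  set a := f - b * δ with ha
  have ha0 : 0 ≤ a := by linarith
  have hbF : b ≤ F ^ (1/p) * δ ^ (-(1/p)) := by
    have h1 : b ^ p ≤ F / δ := by
      rw [le_div_iff₀ hδ]
      have h2 : b ^ p ≤ (a + b) ^ p := Real.rpow_le_rpow hb0 (by linarith) hp0.le
      have h3 : 0 ≤ a ^ p * (1 - δ) := mul_nonneg (Real.rpow_nonneg ha0 _) (by linarith)
      have h4 : a ^ p * (1 - δ) + δ * (a + b) ^ p = F := hb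
      nlinarith [mul_le_mul_of_nonneg_left h2 hδ.le]
    have h5 := Real.rpow_le_rpow (Real.rpow_nonneg hb0 _) h1 (by positivity : 0 ≤ 1 / p)
    rw [← Real.rpow_mul hb0, mul_one_div_cancel hp0.ne', Real.rpow_one, Real.div_rpow hF.le hδ.le]
      at h5
    rwa [Real.rpow_neg hδ.le]
  let φ : ℝ → ℝ := fun x => a + (Iio δ).indicator (fun _ => b) x
  have hφ0 : ∀ x, 0 ≤ φ x := fun x => add_nonneg ha0 (indicator_nonneg (fun _ _ => hb0) x)
  have hmax : max (min 1 δ - 0) 0 = δ := by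
    rw [min_eq_right hδ1.le, sub_zero, max_eq_left hδ.le]
  refine ⟨φ, measurable_const.add (measurable_const.indicator measurableSet_Iio),
    fun x _ => hφ0 x, ?_, ?_, ?_⟩
  · simp only [φ]
    rw [int_step zero_le_one, hmax, ha]; ring
  · have : (fun x => φ x ^ p) =
        fun x => a ^ p + (Iio δ).indicator (fun _ => (a + b) ^ p - a ^ p) x := by
      ext x
      simp only [φ]
      by_cases hx : x ∈ Iio δ
      · simp [indicator_of_mem hx]
      · simp [indicator_of_notMem hx]
    rw [this, int_step zero_le_one, hmax]
    have h4 : a ^ p * (1 - δ) + δ * (a + b) ^ p = F := hb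
    linarith
  · intro x hx
    have hmin : 0 ≤ min 1 (δ / x) := le_min zero_le_one (div_pos hδ hx.1).le
    have key : adicMax N φ x ≤ a + b * min 1 (δ / x) := by
      refine Real.sSup_le ?_ (by positivity)
      rintro r ⟨m, k, hk, hxk, rfl⟩
      have hP : (0:ℝ) < (N:ℝ) ^ m := by positivity
      unfold adicAvg
      simp only [abs_of_nonneg (hφ0 _)]
      have hl : ((k:ℝ) + 1) / (N:ℝ)^m - (k:ℝ) / (N:ℝ)^m = ((N:ℝ)^m)⁻¹ := by ring
      have hle := step_avg (by positivity) hxk hx.1 hδ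
      have huv : (k:ℝ) / (N:ℝ)^m ≤ ((k:ℝ) + 1) / (N:ℝ)^m := hxk.1.trans hxk.2.le
      have heq : ∫ y in adicItv N m k, φ y = _ := int_step huv
      rw [heq]
      rw [hl] at hle ⊢
      calc _ ≤ (N:ℝ)^m * (a * ((N:ℝ)^m)⁻¹ + b * (((N:ℝ)^m)⁻¹ * min 1 (δ / x))) := by gcongr
        _ = _ := by field_simp
    refine key.trans ?_
    rw [← mul_assoc]
    have : a ≤ f := by nlinarith [mul_nonneg hb0 hδ.le]
    exact add_le_add this (mul_le_mul_of_nonneg_right hbF hmin)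

lemma dom_bd {p δ x : ℝ} (hp : 1 < p) (hδ : 0 < δ) (hx : 0 < x) :
    δ ^ (-(1/p)) * min 1 (δ / x) ≤ x ^ (-(1/p)) := by
  have hp1 : 1 / p < 1 := by rw [div_lt_one (by linarith)]; exact hp
  have hp0 : 0 < 1 / p := by positivity
  have hd := Real.rpow_pos_of_pos hδ (-(1/p))
  rcases le_total x δ with h | h
  · calc _ ≤ δ ^ (-(1/p)) * 1 := by gcongr; exact min_le_left _ _
      _ ≤ _ := by
        rw [mul_one]
        exact Real.rpow_le_rpow_of_nonpos hx h (by linarith)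
  · calc _ ≤ δ ^ (-(1/p)) * (δ / x) := by gcongr; exact min_le_right _ _
      _ = δ ^ (1 - 1/p) / x := by
        rw [sub_eq_add_neg, Real.rpow_add hδ, Real.rpow_one]; ring
      _ ≤ x ^ (1 - 1/p) / x := by
        gcongr
      _ = _ := by
        rw [sub_eq_add_neg, Real.rpow_add hx, Real.rpow_one]; field_simp

lemma lim_H {p q f K : ℝ} (hp : 1 < p) (hq0 : 0 < q) (hqp : q < p) (hf : 0 < f) (hK : 0 ≤ K) :
    (∀ δ : ℝ, 0 < δ → IntegrableOn
      (fun x => (f + K * (δ ^ (-(1/p)) * min 1 (δ / x))) ^ q) (Ioo 0 1)) ∧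
    Tendsto (fun δ : ℝ => ∫ x in Ioo (0:ℝ) 1, (f + K * (δ ^ (-(1/p)) * min 1 (δ / x))) ^ q)
      (nhdsWithin 0 (Ioi 0)) (nhds (f ^ q)) := by
  have hp0 : 0 < 1 / p := by positivity
  have hp1 : 1 / p < 1 := by rw [div_lt_one (by linarith)]; exact hp
  have hnn : ∀ δ x : ℝ, 0 < δ → 0 < x → 0 ≤ δ ^ (-(1/p)) * min 1 (δ / x) := by
    intro δ x hδ hx
    have := Real.rpow_pos_of_pos hδ (-(1/p))
    have : 0 ≤ min 1 (δ / x) := le_min zero_le_one (div_pos hδ hx).le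
    positivity
  have hm : ∀ δ : ℝ, AEStronglyMeasurable
      (fun x => (f + K * (δ ^ (-(1/p)) * min 1 (δ / x))) ^ q) (volume.restrict (Ioo 0 1)) := by
    intro δ
    exact Measurable.aestronglyMeasurable (by fun_prop)
  have hbI : IntegrableOn (fun x : ℝ => (f + K) ^ q * x ^ (-(q/p))) (Ioo 0 1) := by
    refine Integrable.const_mul ?_ _
    refine (intervalIntegral.integrableOn_Ioo_rpow_iff one_pos).2 ?_
    have : q / p < 1 := by rw [div_lt_one (by linarith)]; exact hqp
    linarith
  have hbd : ∀ δ : ℝ, 0 < δ → ∀ᵐ x ∂(volume.restrict (Ioo (0:ℝ) 1)),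
      ‖(f + K * (δ ^ (-(1/p)) * min 1 (δ / x))) ^ q‖ ≤ (f + K) ^ q * x ^ (-(q/p)) := by
    intro δ hδ
    filter_upwards [ae_restrict_mem measurableSet_Ioo] with x hx
    have h1 := hnn δ x hδ hx.1
    have hx1 : 1 ≤ x ^ (-(1/p)) :=
      Real.one_le_rpow_of_pos_of_le_one_of_nonpos hx.1 hx.2.le (by linarith)
    rw [Real.norm_of_nonneg (by positivity)]
    have h2 : f + K * (δ ^ (-(1/p)) * min 1 (δ / x)) ≤ (f + K) * x ^ (-(1/p)) := by
      have := mul_le_mul_of_nonneg_left (dom_bd hp hδ hx.1) hK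
      nlinarith
    refine (Real.rpow_le_rpow (by positivity) h2 hq0.le).trans_eq ?_
    rw [Real.mul_rpow (by positivity) (by positivity), ← Real.rpow_mul hx.1.le]
    congr 2; ring
  refine ⟨fun δ hδ => Integrable.mono' hbI (hm δ) (hbd δ hδ), ?_⟩
  have hconst : ∫ x in Ioo (0:ℝ) 1, f ^ q = f ^ q := by simp
  rw [← hconst]
  refine tendsto_integral_filter_of_dominated_convergence _ (Eventually.of_forall hm)
    (eventually_nhdsWithin_of_forall fun δ hδ => hbd δ hδ) hbI ?_
  filter_upwards [ae_restrict_mem measurableSet_Ioo] with x hx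
  have hz : Tendsto (fun δ : ℝ => δ ^ (-(1/p)) * min 1 (δ / x)) (nhdsWithin 0 (Ioi 0)) (nhds 0) := by
    have hup : Tendsto (fun δ : ℝ => δ ^ (1 - 1/p) / x) (nhdsWithin 0 (Ioi 0)) (nhds 0) := by
      have := ((Real.continuous_rpow_const (by linarith : 0 ≤ 1 - 1/p)).tendsto 0).div_const x
      rw [Real.zero_rpow (by linarith), zero_div] at this
      exact this.mono_left nhdsWithin_le_nhds
    refine squeeze_zero' (eventually_nhdsWithin_of_forall fun δ hδ => hnn δ x hδ hx.1)
      (eventually_nhdsWithin_of_forall fun δ hδ => ?_) hup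
    have hδ' : (0:ℝ) < δ := hδ
    have hd := Real.rpow_pos_of_pos hδ' (-(1/p))
    calc _ ≤ δ ^ (-(1/p)) * (δ / x) := by gcongr; exact min_le_right _ _
      _ = δ ^ (1 - 1/p) / x := by
        rw [sub_eq_add_neg, Real.rpow_add hδ', Real.rpow_one]; ring
  have h3 : Tendsto (fun δ : ℝ => f + K * (δ ^ (-(1/p)) * min 1 (δ / x)))
      (nhdsWithin 0 (Ioi 0)) (nhds f) := by
    simpa using (hz.const_mul K).const_add f
  exact h3.rpow_const (Or.inl hf.ne')

theorem stmt10 (N : ℕ) (hN : 2 ≤ N) (p q f F : ℝ) (hp : 1 < p) (hq0 : 0 < q) (hqp : q < p)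
    (hf : 0 < f) (hF : 0 < F) (hfF : f ^ p ≤ F) :
    sInf {y : ℝ | ∃ φ : ℝ → ℝ, Measurable φ ∧ (∀ x ∈ Set.Ico (0:ℝ) 1, 0 ≤ φ x) ∧
        (∫ x in Set.Ico (0:ℝ) 1, φ x) = f ∧ (∫ x in Set.Ico (0:ℝ) 1, φ x ^ p) = F ∧
        y = ∫ x in Set.Ico (0:ℝ) 1, adicMax N φ x ^ q} = f ^ q := by
  have hN0 : 0 < N := by omega
  have hp0 : 0 < p := by linarith
  obtain ⟨hHI, hHt⟩ := lim_H (K := F ^ (1/p)) hp hq0 hqp hf (by positivity)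
  have hev : ∀ᶠ δ : ℝ in nhdsWithin 0 (Ioi 0), 0 < δ ∧ δ < 1 ∧ F ≤ f ^ p * δ ^ (1 - p) := by
    have h1 : ∀ᶠ δ : ℝ in nhdsWithin 0 (Ioi 0), δ ∈ Ioo (0:ℝ) 1 := Ioo_mem_nhdsGT one_pos
    have h2 : Tendsto (fun δ : ℝ => δ ^ (p - 1)) (nhdsWithin 0 (Ioi 0)) (nhds 0) := by
      have := (Real.continuous_rpow_const (by linarith : 0 ≤ p - 1)).tendsto 0
      rw [Real.zero_rpow (by linarith)] at this
      exact this.mono_left nhdsWithin_le_nhds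
    have h3 : ∀ᶠ δ : ℝ in nhdsWithin 0 (Ioi 0), δ ^ (p - 1) < f ^ p / F :=
      h2.eventually (gt_mem_nhds (by positivity))
    filter_upwards [h1, h3] with δ hδ hδ3
    refine ⟨hδ.1, hδ.2, ?_⟩
    have hd := Real.rpow_pos_of_pos hδ.1 (p - 1)
    rw [show 1 - p = -(p - 1) by ring, Real.rpow_neg hδ.1.le, ← div_eq_mul_inv, le_div_iff₀ hd]
    rw [lt_div_iff₀ hF] at hδ3
    linarith
  apply le_antisymm
  · refine ge_of_tendsto hHt ?_
    filter_upwards [hev] with δ hδ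
    obtain ⟨φ, hm, h0, h1, h2, h3⟩ := exists_phi hN0 hp hf hF hfF hδ.1 hδ.2.1 hδ.2.2
    refine le_trans (csInf_le ⟨0, ?_⟩ ⟨φ, hm, h0, h1, h2, rfl⟩) ?_
    · rintro y ⟨ψ, -, -, -, -, rfl⟩
      exact integral_nonneg fun x => Real.rpow_nonneg (adicMax_nonneg _ _ _) _
    · rw [integral_Ico_eq_integral_Ioo]
      refine integral_mono_of_nonneg
        (Eventually.of_forall fun x => Real.rpow_nonneg (adicMax_nonneg _ _ _) _) (hHI δ hδ.1) ?_
      filter_upwards [ae_restrict_mem measurableSet_Ioo] with x hx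
      exact Real.rpow_le_rpow (adicMax_nonneg _ _ _) (h3 x hx) hq0.le
  · obtain ⟨δ, hδ⟩ := hev.exists
    obtain ⟨φ, hm, h0, h1, h2, h3⟩ := exists_phi hN0 hp hf hF hfF hδ.1 hδ.2.1 hδ.2.2
    refine le_csInf ⟨_, φ, hm, h0, h1, h2, rfl⟩ ?_
    rintro y ⟨ψ, -, g0, g1, g2, rfl⟩
    refine lower_bd hN0 hp hq0 hqp hf g0 ?_ ?_ g1
    · by_contra hc
      have := integral_undef hc
      linarith
    · by_contra hc
      have := integral_undef hc
      linarith
end
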